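/- Let a and b be probability measures on ℝ (not necessarily symmetric) and let a ⊞ b be the pushforward of the product measure a × b under the check-node combination map f(x,y) = 2·artanh(tanh(x/2)·tanh(y/2)). Then the Battacharyya parameters satisfy B(a ⊞ b) ≤ B(a) + B(b). -/

import Mathlib

open MeasureTheory Real

/-- The inverse hyperbolic tangent, `artanh x = (1/2)·log((1+x)/(1-x))`. -/
noncomputable def artanh (x : ℝ) : ℝ := (1 / 2) * Real.log ((1 + x) / (1 - x))

/-- The Battacharyya parameter of a probability measure on ℝ:
`B(μ) = ∫ e^{-x/2} dμ(x)`, a value in `[0, ∞]`. -/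
noncomputable def battacharyya (μ : Measure ℝ) : ENNReal :=
  ∫⁻ x, ENNReal.ofReal (Real.exp (-x / 2)) ∂μ

/-- The belief-propagation check-node combination of two LLRs. -/
noncomputable def checkNodeMap (p : ℝ × ℝ) : ℝ :=
  2 * _root_.artanh (Real.tanh (p.1 / 2) * Real.tanh (p.2 / 2))

/-- The check-node convolution `a ⊞ b` of two measures on ℝ: the pushforward of
`a × b` under the check-node combination map. -/
noncomputable def checkConv (a b : Measure ℝ) : Measure ℝ :=
  (a.prod b).map checkNodeMap

theorem tanh_half_eq (x : ℝ) :
    Real.tanh (x / 2) = (1 - Real.exp (-x / 2) ^ 2) / (1 + Real.exp (-x / 2) ^ 2) := by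
  have hpos := Real.exp_pos (-x / 2)
  have h1 : Real.exp (x / 2) = (Real.exp (-x / 2))⁻¹ := by
    rw [← Real.exp_neg]; congr 1; ring
  have h2 : Real.exp (-(x / 2)) = Real.exp (-x / 2) := by congr 1; ring
  rw [Real.tanh_eq_sinh_div_cosh, Real.sinh_eq, Real.cosh_eq, h1, h2]
  field_simp

theorem exp_checkNodeMap_le (x y : ℝ) :
    Real.exp (-checkNodeMap (x, y) / 2) ≤ Real.exp (-x / 2) + Real.exp (-y / 2) := by
  have hu := Real.exp_pos (-x / 2)
  have hv := Real.exp_pos (-y / 2)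
  have key : checkNodeMap (x, y) = Real.log ((1 + Real.exp (-x / 2) ^ 2 * Real.exp (-y / 2) ^ 2) /
      (Real.exp (-x / 2) ^ 2 + Real.exp (-y / 2) ^ 2)) := by
    simp only [checkNodeMap, _root_.artanh, tanh_half_eq]
    generalize Real.exp (-x / 2) = u at *
    generalize Real.exp (-y / 2) = v at *
    rw [← mul_assoc, mul_one_div_cancel two_ne_zero, one_mul]
    congr 1
    have e1 : 1 + (1 - u ^ 2) / (1 + u ^ 2) * ((1 - v ^ 2) / (1 + v ^ 2)) =
        2 * (1 + u ^ 2 * v ^ 2) / ((1 + u ^ 2) * (1 + v ^ 2)) := by field_simp; ring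
    have e2 : 1 - (1 - u ^ 2) / (1 + u ^ 2) * ((1 - v ^ 2) / (1 + v ^ 2)) =
        2 * (u ^ 2 + v ^ 2) / ((1 + u ^ 2) * (1 + v ^ 2)) := by field_simp; ring
    rw [e1, e2]
    field_simp
  refine (sq_le_sq₀ (Real.exp_pos _).le (by positivity)).1 ?_
  have h3 : Real.exp (-checkNodeMap (x, y) / 2) ^ 2 = Real.exp (-checkNodeMap (x, y)) := by
    rw [← Real.exp_nat_mul]; congr 1; push_cast; ring
  rw [h3, key]
  generalize Real.exp (-x / 2) = u at *
  generalize Real.exp (-y / 2) = v at *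
  rw [Real.exp_neg, Real.exp_log (by positivity), inv_div]
  rw [div_le_iff₀ (by positivity)]
  have : 0 ≤ (u + v) ^ 2 * (u ^ 2 * v ^ 2) := by positivity
  nlinarith [mul_pos hu hv]

theorem measurable_checkNodeMap : Measurable checkNodeMap := by
  have ht : Measurable Real.tanh := by
    have : Real.tanh = fun x => Real.sinh x / Real.cosh x := by
      funext x; exact Real.tanh_eq_sinh_div_cosh x
    rw [this]
    exact Real.measurable_sinh.div Real.measurable_cosh
  unfold checkNodeMap _root_.artanh
  fun_prop

/-- For any (not necessarily symmetric) probability measures `a`, `b` on ℝ,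
`B(a ⊞ b) ≤ B(a) + B(b)`. -/
theorem battacharyya_checkConv_le (a b : Measure ℝ)
    [IsProbabilityMeasure a] [IsProbabilityMeasure b] :
    battacharyya (checkConv a b) ≤ battacharyya a + battacharyya b := by
  have hm : Measurable fun x : ℝ => ENNReal.ofReal (Real.exp (-x / 2)) := by fun_prop
  unfold battacharyya checkConv
  rw [lintegral_map hm measurable_checkNodeMap]
  calc _ ≤ ∫⁻ p : ℝ × ℝ, (ENNReal.ofReal (Real.exp (-p.1 / 2)) +
          ENNReal.ofReal (Real.exp (-p.2 / 2))) ∂(a.prod b) := by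
        refine lintegral_mono fun p => ?_
        rw [← ENNReal.ofReal_add (Real.exp_pos _).le (Real.exp_pos _).le]
        exact ENNReal.ofReal_le_ofReal (exp_checkNodeMap_le p.1 p.2)
    _ = _ := by
        rw [lintegral_add_left (by fun_prop)]
        congr 1
        · exact (measurePreserving_fst (μ := a) (ν := b)).lintegral_comp hm
        · exact (measurePreserving_snd (μ := a) (ν := b)).lintegral_comp hm
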